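/- arXiv:1504.03496 — 6 statements merged into one kernel-verified Lean document; each statement's English description precedes it below -/
import Mathlib

section
/- Assume further that there is W₀ ∈ ℝ with ∫_0^∞ Θ(u) du = Φ/q − W₀ and ∫_0^∞ e^{−φu} Θ(u) du = (φ−Φ)/(δφ) − W₀. Let h′(+∞) := lim_{y→+∞} h′(y) ∈ (−∞, +∞] and h′(−∞) := lim_{y→−∞} h′(y) ∈ [−∞, +∞) (these limits exist by convexity). Then, in the extended reals, lim_{b→+∞} I(b) = (δΦ/φ)( h′(+∞)/q − β ) and lim_{b→−∞} I(b) = (δΦ/φ)( h′(−∞)/q − β ); in particular I(b) → +∞ as b → +∞ when h′(+∞) = +∞, and I(b) → −∞ as b → −∞ when h′(−∞) = −∞. -/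
open MeasureTheory Set Filter

/-!
Up to the constant `-δβΦ/φ`, `I b` is the integral of `h'(· + b)` against a nonnegative density
on `ℝ`: `δ G` on the negative half-line and `(φ - Φ)/φ · e^{-φ y}` on the positive one. The change
of variables `u = z - y` and Fubini express `∫ G` through the two integrals of `Θ`, and the total
mass of the density comes out as `δΦ/(φq)`, with `W₀` cancelling. As `h'` is monotone, letting
`b → ±∞` under the integral yields the limits: by dominated convergence if `h'(±∞)` is finite, by
truncation if it is infinite.
-/

section MonotoneShift

variable {α : Type*} [MeasurableSpace α] {μ : Measure α} {f : ℝ → ℝ} {k X : α → ℝ}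

lemma tendsto_integral_comp_add_mul_nhds {l : ℝ} (hf : Monotone f) (hk : Integrable k μ)
    (hk0 : 0 ≤ᵐ[μ] k) (hint : ∀ b, Integrable (fun y => f (X y + b) * k y) μ)
    (hl : Tendsto f atTop (nhds l)) :
    Tendsto (fun b => ∫ y, f (X y + b) * k y ∂μ) atTop (nhds (l * ∫ y, k y ∂μ)) := by
  rw [← integral_const_mul]
  refine tendsto_integral_filter_of_dominated_convergence
    (fun y => |f (X y + 0) * k y| + |l * k y|) ?_ ?_ ?_ ?_
  · exact Eventually.of_forall fun b => (hint b).aestronglyMeasurable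
  · filter_upwards [eventually_ge_atTop 0] with b hb
    filter_upwards [hk0] with y hy
    have lower : f (X y + 0) * k y ≤ f (X y + b) * k y :=
      mul_le_mul_of_nonneg_right (hf (by linarith)) hy
    have upper : f (X y + b) * k y ≤ l * k y :=
      mul_le_mul_of_nonneg_right (hf.ge_of_tendsto hl _) hy
    exact (abs_le_max_abs_abs lower upper).trans
      (max_le_add_of_nonneg (abs_nonneg _) (abs_nonneg _))
  · exact (hint 0).abs.add (hk.const_mul l).abs
  · exact Eventually.of_forall fun y =>
      (hl.comp (tendsto_atTop_add_const_left _ _ tendsto_id)).mul_const _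

lemma tendsto_integral_comp_add_mul_atTop_atTop (hf : Monotone f) (hk : Integrable k μ)
    (hk0 : 0 ≤ᵐ[μ] k) (hk_pos : 0 < ∫ y, k y ∂μ)
    (hint : ∀ b, Integrable (fun y => f (X y + b) * k y) μ) (hl : Tendsto f atTop atTop) :
    Tendsto (fun b => ∫ y, f (X y + b) * k y ∂μ) atTop atTop := by
  refine tendsto_atTop.2 fun a => ?_
  set c : ℝ := (a + 1) / ∫ y, k y ∂μ with hc
  have truncated_integrable : ∀ b, Integrable (fun y => min (f (X y + b)) c * k y) μ := by
    intro b
    refine ((hint b).inf (hk.const_mul c)).congr ?_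
    filter_upwards [hk0] with y hy using (min_mul_of_nonneg _ _ hy).symm
  have truncated_eventually : (fun x => min (f x) c) =ᶠ[atTop] fun _ => c := by
    filter_upwards [hl.eventually_ge_atTop c] with x hx using min_eq_right hx
  have truncated_tendsto :
      Tendsto (fun b => ∫ y, min (f (X y + b)) c * k y ∂μ) atTop (nhds (a + 1)) := by
    have := tendsto_integral_comp_add_mul_nhds (hf.min monotone_const) hk hk0 truncated_integrable
      (tendsto_const_nhds.congr' truncated_eventually.symm)
    rwa [hc, div_mul_cancel₀ _ hk_pos.ne'] at this
  filter_upwards [truncated_tendsto.eventually (eventually_ge_nhds (lt_add_one a))] with b hb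
  refine hb.trans (integral_mono_ae (truncated_integrable b) (hint b) ?_)
  filter_upwards [hk0] with y hy using mul_le_mul_of_nonneg_right (min_le_left _ _) hy

lemma tendsto_coe_integral_comp_add_mul_atTop {L : EReal} (hf : Monotone f)
    (hk : Integrable k μ) (hk0 : 0 ≤ᵐ[μ] k)
    (hint : ∀ b, Integrable (fun y => f (X y + b) * k y) μ)
    (hL : Tendsto (fun x => (f x : EReal)) atTop (nhds L)) :
    Tendsto (fun b => ((∫ y, f (X y + b) * k y ∂μ : ℝ) : EReal)) atTop
      (nhds (L * ((∫ y, k y ∂μ : ℝ) : EReal))) := by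
  induction L with
  | bot =>
    have hle : (f 0 : EReal) ≤ ⊥ :=
      (EReal.coe_strictMono.monotone.comp hf).ge_of_tendsto hL 0
    exact absurd (le_bot_iff.1 hle) (EReal.coe_ne_bot _)
  | coe l =>
    rw [← EReal.coe_mul, EReal.tendsto_coe]
    exact tendsto_integral_comp_add_mul_nhds hf hk hk0 hint (EReal.tendsto_coe.1 hL)
  | top =>
    rcases (integral_nonneg_of_ae hk0).eq_or_lt with hzero | hpos
    · have hk_zero : k =ᵐ[μ] 0 := (integral_eq_zero_iff_of_nonneg_ae hk0 hk).1 hzero.symm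
      have hint_zero : ∀ b, ∫ y, f (X y + b) * k y ∂μ = 0 := fun b =>
        integral_eq_zero_of_ae (by filter_upwards [hk_zero] with y hy; simp [hy])
      simp [hint_zero, ← hzero]
    · rw [EReal.top_mul_coe_of_pos hpos, EReal.tendsto_coe_nhds_top_iff]
      exact tendsto_integral_comp_add_mul_atTop_atTop hf hk hk0 hpos hint
        (EReal.tendsto_coe_nhds_top_iff.1 hL)

lemma tendsto_coe_integral_comp_add_mul_atBot {L : EReal} (hf : Monotone f)
    (hk : Integrable k μ) (hk0 : 0 ≤ᵐ[μ] k)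
    (hint : ∀ b, Integrable (fun y => f (X y + b) * k y) μ)
    (hL : Tendsto (fun x => (f x : EReal)) atBot (nhds L)) :
    Tendsto (fun b => ((∫ y, f (X y + b) * k y ∂μ : ℝ) : EReal)) atBot
      (nhds (L * ((∫ y, k y ∂μ : ℝ) : EReal))) := by
  have reflected := tendsto_coe_integral_comp_add_mul_atTop (L := -L)
    (f := fun x => -f (-x)) (X := fun y => -X y)
    (fun x y hxy => neg_le_neg (hf (neg_le_neg hxy))) hk hk0
    (fun b => (hint (-b)).neg.congr (Eventually.of_forall fun y => by simp [add_comm]))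
    (by simpa only [Function.comp_def, EReal.coe_neg] using
      (continuous_neg.tendsto L).comp (hL.comp tendsto_neg_atTop_atBot))
  have := (continuous_neg.tendsto _).comp (reflected.comp tendsto_neg_atBot_atTop)
  simpa [Function.comp_def, integral_neg, neg_add, add_comm] using this

end MonotoneShift

section HalfLineCorrelation

variable {g Θ : ℝ → ℝ}

lemma integral_mul_comp_sub_nonneg (hg : ∀ z ∈ Ioi 0, 0 ≤ g z) (hΘ : ∀ u ∈ Ioi 0, 0 ≤ Θ u)
    {y : ℝ} (hy : y ≤ 0) : 0 ≤ ∫ z in Ioi 0, g z * Θ (z - y) :=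
  setIntegral_nonneg measurableSet_Ioi fun z hz =>
    mul_nonneg (hg z hz) (hΘ _ (sub_pos.2 (hy.trans_lt hz)))

lemma measurePreserving_snd_sub_fst :
    MeasurePreserving (fun p : ℝ × ℝ => (p.2 - p.1, p.2)) := by
  have := (measurePreserving_add_prod (volume : Measure ℝ) (volume : Measure ℝ)).comp
    ((Measure.measurePreserving_neg volume).prod (MeasurePreserving.id volume))
  simpa [Function.comp_def, Measure.volume_eq_prod, neg_add_eq_sub] using this

lemma measurableEmbedding_snd_sub_fst :
    MeasurableEmbedding (fun p : ℝ × ℝ => (p.2 - p.1, p.2)) :=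
  (MeasurableEquiv.ofInvolutive (fun p : ℝ × ℝ => (p.2 - p.1, p.2)) (fun p => by simp)
    measurePreserving_snd_sub_fst.measurable).measurableEmbedding

lemma preimage_snd_sub_fst_quadrant_inter :
    (fun p : ℝ × ℝ => (p.2 - p.1, p.2)) ⁻¹' (Ioi 0 ×ˢ Ioi 0 ∩ {p | p.2 < p.1})
      = Iio 0 ×ˢ Ioi 0 := by
  ext ⟨y, z⟩
  simp only [mem_preimage, mem_inter_iff, mem_prod, mem_Ioi, mem_Iio, mem_ofPred_eq]
  constructor
  · rintro ⟨⟨-, hz⟩, hy⟩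
    exact ⟨by linarith, hz⟩
  · rintro ⟨hy, hz⟩
    exact ⟨⟨by linarith, hz⟩, by linarith⟩

lemma integrableOn_quadrant_mul (hg : IntegrableOn g (Ioi 0)) (hΘ : IntegrableOn Θ (Ioi 0)) :
    IntegrableOn (fun p : ℝ × ℝ => g p.2 * Θ p.1) (Ioi 0 ×ˢ Ioi 0) := by
  rw [IntegrableOn, Measure.volume_eq_prod, ← Measure.prod_restrict]
  simpa only [mul_comm] using hΘ.mul_prod hg

lemma integrableOn_mul_comp_sub (hg : IntegrableOn g (Ioi 0)) (hΘ : IntegrableOn Θ (Ioi 0)) :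
    IntegrableOn (fun p : ℝ × ℝ => g p.2 * Θ (p.2 - p.1)) (Iio 0 ×ˢ Ioi 0) := by
  rw [← preimage_snd_sub_fst_quadrant_inter]
  exact (measurePreserving_snd_sub_fst.integrableOn_comp_preimage
    measurableEmbedding_snd_sub_fst).2
      ((integrableOn_quadrant_mul hg hΘ).mono_set inter_subset_left)

lemma integrableOn_integral_mul_comp_sub (hg : IntegrableOn g (Ioi 0))
    (hΘ : IntegrableOn Θ (Ioi 0)) :
    IntegrableOn (fun y => ∫ z in Ioi 0, g z * Θ (z - y)) (Iio 0) := by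
  have := integrableOn_mul_comp_sub hg hΘ
  rw [IntegrableOn, Measure.volume_eq_prod, ← Measure.prod_restrict] at this
  exact this.integral_prod_left

lemma integral_integral_mul_comp_sub (hg : IntegrableOn g (Ioi 0))
    (hΘ : IntegrableOn Θ (Ioi 0)) :
    ∫ y in Iio 0, ∫ z in Ioi 0, g z * Θ (z - y)
      = ∫ u in Ioi 0, (∫ z in (0)..u, g z) * Θ u := by
  have measurableSet_below : MeasurableSet {p : ℝ × ℝ | p.2 < p.1} :=
    measurableSet_lt measurable_snd measurable_fst
  calc ∫ y in Iio 0, ∫ z in Ioi 0, g z * Θ (z - y)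
      = ∫ p in Iio 0 ×ˢ Ioi 0, g p.2 * Θ (p.2 - p.1) :=
        (setIntegral_prod _ (integrableOn_mul_comp_sub hg hΘ)).symm
    _ = ∫ p in Ioi 0 ×ˢ Ioi 0 ∩ {p : ℝ × ℝ | p.2 < p.1}, g p.2 * Θ p.1 := by
        rw [← preimage_snd_sub_fst_quadrant_inter]
        exact measurePreserving_snd_sub_fst.setIntegral_preimage_emb
          measurableEmbedding_snd_sub_fst (fun p => g p.2 * Θ p.1) _
    _ = ∫ p in Ioi 0 ×ˢ Ioi 0, {p : ℝ × ℝ | p.2 < p.1}.indicator (fun p => g p.2 * Θ p.1) p :=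
        (setIntegral_indicator measurableSet_below).symm
    _ = ∫ u in Ioi 0, ∫ z in Ioi 0, (Iio u).indicator (fun z => g z * Θ u) z :=
        setIntegral_prod _ ((integrableOn_quadrant_mul hg hΘ).indicator measurableSet_below)
    _ = ∫ u in Ioi 0, (∫ z in (0)..u, g z) * Θ u := by
        refine setIntegral_congr_fun measurableSet_Ioi fun u hu => ?_
        simp only [setIntegral_indicator measurableSet_Iio, Ioi_inter_Iio, integral_mul_const,
          intervalIntegral.integral_of_le (le_of_lt hu), integral_Ioc_eq_integral_Ioo]

lemma integral_exp_neg_mul {φ : ℝ} (hφ : φ ≠ 0) (u : ℝ) :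
    ∫ z in (0)..u, Real.exp (-φ * z) = (1 - Real.exp (-φ * u)) / φ := by
  rw [intervalIntegral.integral_comp_mul_left _ (neg_ne_zero.2 hφ), integral_exp]
  simp only [mul_zero, Real.exp_zero, smul_eq_mul]
  field_simp
  ring

lemma integral_integral_exp_neg_mul_comp_sub {φ : ℝ} (hφ : 0 < φ)
    (hΘ : IntegrableOn Θ (Ioi 0)) :
    ∫ y in Iio 0, ∫ z in Ioi 0, Real.exp (-φ * z) * Θ (z - y)
      = ((∫ u in Ioi 0, Θ u) - ∫ u in Ioi 0, Real.exp (-φ * u) * Θ u) / φ := by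
  have exp_mul_integrable : IntegrableOn (fun u => Real.exp (-φ * u) * Θ u) (Ioi 0) := by
    refine hΘ.bdd_mul (c := 1) (by fun_prop) ?_
    filter_upwards [ae_restrict_mem measurableSet_Ioi] with u hu
    rw [Real.norm_eq_abs, Real.abs_exp, Real.exp_le_one_iff, neg_mul, neg_nonpos]
    exact mul_nonneg hφ.le (le_of_lt hu)
  rw [integral_integral_mul_comp_sub (exp_neg_integrableOn_Ioi 0 hφ) hΘ,
    ← integral_sub hΘ exp_mul_integrable, ← integral_div]
  congr with u
  rw [integral_exp_neg_mul hφ.ne']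
  ring

end HalfLineCorrelation

section CostWeight

variable {δ Φ φ : ℝ} {F G : ℝ → ℝ}

/-- The density against which `h'(· + b)` is integrated in `I b`, up to the additive constant
`-δβΦ/φ`. Its value at `0`, taken from the right-hand branch, is irrelevant. -/
noncomputable def costWeight (δ Φ φ : ℝ) (G : ℝ → ℝ) : ℝ → ℝ :=
  (Iio 0).piecewise (fun y => δ * G y) (fun y => (φ - Φ) / φ * Real.exp (-φ * y))

lemma costWeight_nonneg (hδ : 0 ≤ δ) (hφ : 0 ≤ φ) (hΦφ : Φ ≤ φ) (hG : ∀ y < 0, 0 ≤ G y) (y : ℝ) :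
    0 ≤ costWeight δ Φ φ G y := by
  unfold costWeight
  by_cases hy : y ∈ Iio 0
  · rw [piecewise_eq_of_mem _ _ _ hy]
    exact mul_nonneg hδ (hG y hy)
  · rw [piecewise_eq_of_notMem _ _ _ hy]
    exact mul_nonneg (div_nonneg (sub_nonneg.2 hΦφ) hφ) (Real.exp_pos _).le

lemma mul_costWeight_eq_piecewise :
    (fun y => F y * costWeight δ Φ φ G y) = (Iio 0).piecewise (fun y => δ * (F y * G y))
      (fun y => (φ - Φ) / φ * (F y * Real.exp (-φ * y))) := by
  ext y
  by_cases hy : y ∈ Iio 0 <;> simp only [costWeight, piecewise, hy, if_true, if_false] <;> ring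

lemma integrable_mul_costWeight (hG : IntegrableOn (fun y => F y * G y) (Iio 0))
    (hexp : IntegrableOn (fun y => F y * Real.exp (-φ * y)) (Ioi 0)) :
    Integrable (fun y => F y * costWeight δ Φ φ G y) := by
  rw [mul_costWeight_eq_piecewise]
  refine Integrable.piecewise measurableSet_Iio (hG.const_mul δ) ?_
  rw [compl_Iio, integrableOn_Ici_iff_integrableOn_Ioi]
  exact hexp.const_mul _

lemma integral_mul_costWeight (hG : IntegrableOn (fun y => F y * G y) (Iio 0))
    (hexp : IntegrableOn (fun y => F y * Real.exp (-φ * y)) (Ioi 0)) :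
    ∫ y, F y * costWeight δ Φ φ G y =
      δ * (∫ y in Iio 0, F y * G y) +
        (φ - Φ) / φ * ∫ y in Ioi 0, F y * Real.exp (-φ * y) := by
  have hexp' : IntegrableOn (fun y => F y * Real.exp (-φ * y)) (Iio 0)ᶜ := by
    rwa [compl_Iio, integrableOn_Ici_iff_integrableOn_Ioi]
  rw [mul_costWeight_eq_piecewise, integral_piecewise measurableSet_Iio (hG.const_mul δ)
    (hexp'.const_mul _), compl_Iio, integral_Ici_eq_integral_Ioi, integral_const_mul,
    integral_const_mul]

lemma integrable_costWeight (hφ : 0 < φ) (hG : IntegrableOn G (Iio 0)) :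
    Integrable (costWeight δ Φ φ G) := by
  simpa only [one_mul] using integrable_mul_costWeight (δ := δ) (Φ := Φ) (F := fun _ => 1)
    (by simpa only [one_mul] using hG)
    (by simpa only [one_mul] using exp_neg_integrableOn_Ioi 0 hφ)

lemma integral_costWeight (hφ : 0 < φ) (hG : IntegrableOn G (Iio 0)) :
    ∫ y, costWeight δ Φ φ G y = δ * (∫ y in Iio 0, G y) + (φ - Φ) / φ ^ 2 := by
  have := integral_mul_costWeight (δ := δ) (Φ := Φ) (F := fun _ => 1)
    (by simpa only [one_mul] using hG)
    (by simpa only [one_mul] using exp_neg_integrableOn_Ioi 0 hφ)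
  simp only [one_mul] at this
  rw [this, integral_exp_mul_Ioi (neg_neg_of_pos hφ)]
  simp only [mul_zero, Real.exp_zero]
  field_simp

lemma integral_costWeight_eq_div {q W₀ : ℝ} {Θ : ℝ → ℝ} (hδ : δ ≠ 0) (hφ : 0 < φ)
    (hG : ∀ y ∈ Iio 0, G y = ∫ z in Ioi 0, Real.exp (-φ * z) * Θ (z - y))
    (hG_int : IntegrableOn G (Iio 0)) (hΘ_int : IntegrableOn Θ (Ioi 0))
    (hΘ : ∫ u in Ioi 0, Θ u = Φ / q - W₀)
    (hΘ_exp : ∫ u in Ioi 0, Real.exp (-φ * u) * Θ u = (φ - Φ) / (δ * φ) - W₀) :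
    ∫ y, costWeight δ Φ φ G y = δ * Φ / φ / q := by
  rw [integral_costWeight hφ hG_int, setIntegral_congr_fun measurableSet_Iio hG,
    integral_integral_exp_neg_mul_comp_sub hφ hΘ_int, hΘ, hΘ_exp]
  field_simp
  ring

end CostWeight

section AffineLimit

variable {α : Type*} {c q β : ℝ} {l : Filter α} {J : α → ℝ}

lemma ereal_coe_mul_div_sub_coe (hc : 0 ≤ c) (L : EReal) :
    (c : EReal) * (L / (q : EReal) - (β : EReal)) = L * ((c / q : ℝ) : EReal) - (c * β : ℝ) := by
  rw [EReal.mul_sub_of_nonneg_of_ne_top (EReal.coe_nonneg.2 hc) (EReal.coe_ne_top c),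
    EReal.coe_mul, EReal.coe_div, EReal.mul_div, EReal.mul_div, mul_comm L]

lemma tendsto_coe_sub_const_mul {L : EReal} (hc : 0 ≤ c)
    (hJ : Tendsto (fun b => (J b : EReal)) l (nhds (L * ((c / q : ℝ) : EReal)))) :
    Tendsto (fun b => ((J b - c * β : ℝ) : EReal)) l
      (nhds ((c : EReal) * (L / (q : EReal) - (β : EReal)))) := by
  rw [ereal_coe_mul_div_sub_coe hc]
  simp only [sub_eq_add_neg, ← EReal.coe_neg]
  exact (EReal.continuousAt_add (Or.inr (EReal.coe_ne_bot _)) (Or.inr (EReal.coe_ne_top _))).tendsto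
    |>.comp (hJ.prodMk_nhds tendsto_const_nhds)

lemma ereal_coe_mul_top_div_sub_coe (hc : 0 < c) (hq : 0 < q) :
    (c : EReal) * (⊤ / (q : EReal) - (β : EReal)) = ⊤ := by
  rw [EReal.top_div_of_pos_ne_top (EReal.coe_pos.2 hq) (EReal.coe_ne_top q), EReal.top_sub_coe,
    EReal.coe_mul_top_of_pos hc]

lemma ereal_coe_mul_bot_div_sub_coe (hc : 0 < c) (hq : 0 < q) :
    (c : EReal) * (⊥ / (q : EReal) - (β : EReal)) = ⊥ := by
  rw [EReal.bot_div_of_pos_ne_top (EReal.coe_pos.2 hq) (EReal.coe_ne_top q), EReal.bot_sub,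
    EReal.coe_mul_bot_of_pos hc]

end AffineLimit

theorem stmt6_general {q δ β Φ φ : ℝ} (hq : 0 < q) (hδ : 0 < δ) (hΦ : 0 < Φ) (hΦφ : Φ < φ)
    {Θ : ℝ → ℝ} (hΘnn : ∀ u ∈ Ioi (0 : ℝ), 0 ≤ Θ u) {f : ℝ → ℝ} (hf : Monotone f) {G : ℝ → ℝ}
    (hG : ∀ y ∈ Iio (0 : ℝ), G y = ∫ z in Ioi (0 : ℝ), Real.exp (-φ * z) * Θ (z - y))
    (hint_exp : ∀ b, IntegrableOn (fun y => f (y + b) * Real.exp (-φ * y)) (Ioi 0))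
    (hint_G : ∀ b, IntegrableOn (fun y => f (y + b) * G y) (Iio 0))
    {I : ℝ → ℝ} (hI : ∀ b, I b =
      (φ - Φ) / φ * (∫ y in Ioi (0 : ℝ), f (y + b) * Real.exp (-φ * y))
      + δ * ((∫ y in Iio (0 : ℝ), f (y + b) * G y) - β * Φ / φ))
    {W₀ : ℝ} (hΘ : ∫ u in Ioi (0 : ℝ), Θ u = Φ / q - W₀)
    (hΘexp : ∫ u in Ioi (0 : ℝ), Real.exp (-φ * u) * Θ u = (φ - Φ) / (δ * φ) - W₀)
    (hΘint : IntegrableOn Θ (Ioi 0)) {Lp Lm : EReal}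
    (hLp : Tendsto (fun y => (f y : EReal)) atTop (nhds Lp))
    (hLm : Tendsto (fun y => (f y : EReal)) atBot (nhds Lm)) :
    Tendsto (fun b => (I b : EReal)) atTop
      (nhds (((δ * Φ / φ : ℝ) : EReal) * (Lp / (q : EReal) - (β : EReal)))) ∧
    Tendsto (fun b => (I b : EReal)) atBot
      (nhds (((δ * Φ / φ : ℝ) : EReal) * (Lm / (q : EReal) - (β : EReal)))) ∧
    (Lp = ⊤ → Tendsto I atTop atTop) ∧
    (Lm = ⊥ → Tendsto I atBot atBot) := by
  have hφ : 0 < φ := hΦ.trans hΦφ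
  have hc : 0 < δ * Φ / φ := by positivity
  have hG_int : IntegrableOn G (Iio 0) :=
    (integrableOn_integral_mul_comp_sub (exp_neg_integrableOn_Ioi 0 hφ) hΘint).congr_fun
      (fun y hy => (hG y hy).symm) measurableSet_Iio
  have hG_nonneg : ∀ y < 0, 0 ≤ G y := fun y hy => hG y hy ▸
    integral_mul_comp_sub_nonneg (fun z _ => (Real.exp_pos (-φ * z)).le) hΘnn hy.le
  have hk_nonneg : 0 ≤ᵐ[volume] costWeight δ Φ φ G :=
    Eventually.of_forall (costWeight_nonneg hδ.le hφ.le hΦφ.le hG_nonneg)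
  have hk_int : Integrable (costWeight δ Φ φ G) := integrable_costWeight hφ hG_int
  have hfk_int b : Integrable (fun y => f (y + b) * costWeight δ Φ φ G y) :=
    integrable_mul_costWeight (hint_G b) (hint_exp b)
  have hI_eq : I = fun b => (∫ y, f (y + b) * costWeight δ Φ φ G y) - δ * Φ / φ * β := by
    ext b
    rw [hI, integral_mul_costWeight (hint_G b) (hint_exp b)]
    ring
  have htop := tendsto_coe_integral_comp_add_mul_atTop hf hk_int hk_nonneg hfk_int hLp
  have hbot := tendsto_coe_integral_comp_add_mul_atBot hf hk_int hk_nonneg hfk_int hLm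
  rw [integral_costWeight_eq_div hδ.ne' hφ hG hG_int hΘint hΘ hΘexp] at htop hbot
  replace htop := tendsto_coe_sub_const_mul (β := β) hc.le htop
  replace hbot := tendsto_coe_sub_const_mul (β := β) hc.le hbot
  rw [hI_eq]
  refine ⟨htop, hbot, ?_, ?_⟩
  · rintro rfl
    rwa [ereal_coe_mul_top_div_sub_coe hc hq, EReal.tendsto_coe_nhds_top_iff] at htop
  · rintro rfl
    rwa [ereal_coe_mul_bot_div_sub_coe hc hq, EReal.tendsto_coe_nhds_bot_iff] at hbot

/-- Lemma 3.3: the limits of `I` at `±∞` in the extended reals are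
`(δΦ/φ)(h'(±∞)/q - β)`; in particular `I → +∞` when `h'(+∞) = +∞` and `I → -∞`
when `h'(-∞) = -∞`. -/
theorem stmt6
    (q δ β Φ φ : ℝ)
    (hq : 0 < q) (hδ : 0 < δ) (hΦ : 0 < Φ) (hΦφ : Φ < φ)
    (Θ : ℝ → ℝ) (hΘmeas : Measurable Θ) (hΘnn : ∀ u ∈ Set.Ioi (0 : ℝ), 0 ≤ Θ u)
    (h : ℝ → ℝ) (hconv : ConvexOn ℝ Set.univ h) (hdiff : Differentiable ℝ h)
    (G : ℝ → ℝ)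
    (hG : ∀ y ∈ Set.Iio (0 : ℝ),
      G y = ∫ z in Set.Ioi (0 : ℝ), Real.exp (-φ * z) * Θ (z - y))
    (hint1 : ∀ b : ℝ,
      IntegrableOn (fun y => deriv h (y + b) * Real.exp (-φ * y)) (Set.Ioi 0))
    (hint2 : ∀ b : ℝ,
      IntegrableOn (fun y => deriv h (y + b) * G y) (Set.Iio 0))
    (I : ℝ → ℝ)
    (hI : ∀ b : ℝ, I b =
      (φ - Φ) / φ * (∫ y in Set.Ioi (0 : ℝ), deriv h (y + b) * Real.exp (-φ * y))
      + δ * ((∫ y in Set.Iio (0 : ℝ), deriv h (y + b) * G y) - β * Φ / φ))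
    (W₀ : ℝ)
    (hΘ1 : ∫ u in Set.Ioi (0 : ℝ), Θ u = Φ / q - W₀)
    (hΘ2 : ∫ u in Set.Ioi (0 : ℝ), Real.exp (-φ * u) * Θ u = (φ - Φ) / (δ * φ) - W₀)
    (hΘint : IntegrableOn Θ (Set.Ioi 0))
    (Lp Lm : EReal)
    (hLp : Tendsto (fun y => ((deriv h y : ℝ) : EReal)) atTop (nhds Lp))
    (hLm : Tendsto (fun y => ((deriv h y : ℝ) : EReal)) atBot (nhds Lm))
    (hLp_ne : Lp ≠ ⊥) (hLm_ne : Lm ≠ ⊤) :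
    Tendsto (fun b => ((I b : ℝ) : EReal)) atTop
      (nhds (((δ * Φ / φ : ℝ) : EReal) * (Lp / ((q : ℝ) : EReal) - ((β : ℝ) : EReal)))) ∧
    Tendsto (fun b => ((I b : ℝ) : EReal)) atBot
      (nhds (((δ * Φ / φ : ℝ) : EReal) * (Lm / ((q : ℝ) : EReal) - ((β : ℝ) : EReal)))) ∧
    (Lp = ⊤ → Tendsto I atTop atTop) ∧
    (Lm = ⊥ → Tendsto I atBot atBot) :=
  stmt6_general hq hδ hΦ hΦφ hΘnn (monotoneOn_univ.1 (hconv.monotoneOn_deriv fun x _ => hdiff x))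
    hG hint1 hint2 hI hΘ1 hΘ2 hΘint hLp hLm
end

section
/- Assume further that there are W₀ ∈ ℝ and m ∈ ℝ with ∫_0^∞ Θ(u) du = Φ/q − W₀, ∫_0^∞ e^{−φu} Θ(u) du = (φ−Φ)/(δφ) − W₀, and ∫_0^∞ u Θ(u) du = (Φ/q) m. If h(y) = α y² with α > 0, then for every b ∈ ℝ, I(b) = (2αδΦ/(qφ)) · ( b − ( βq/(2α) + m − 1/φ ) ); in particular I(b) = 0 if and only if b = βq/(2α) + m − 1/φ. -/
open MeasureTheory Set Filter

/-!
The double integral behind `∫ h'(y + b) G(y) dy` has weight `h'(y + b) e^{-φ(y + u)} Θ(u)` on the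
triangle `-u < y < 0`. For `h'(y) = 2αy` its integral over `y` is
`2α((b/φ + 1/φ²)(1 - e^{-φu}) - u/φ) Θ(u)`, so only `∫ Θ`, `∫ e^{-φu} Θ` and `∫ u Θ` enter. The
first two appear through their difference `Φ/q - (φ - Φ)/(δφ)`, in which `W₀` cancels. Since
`∫_0^∞ h'(y + b) e^{-φy} dy = 2α(b/φ + 1/φ²)`, the first summand of `I(b)` cancels the contribution
of `(φ - Φ)/(δφ)`, and what is left is affine in `b`.
-/

section RightCorrelation

variable {E : Type*} [NormedAddCommGroup E] [NormedSpace ℝ E]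

/-- The correlation `y ↦ ∫_0^∞ g(z) Θ(z - y) dz` of `Θ` with a weight `g` on the positive half-line.
The function `G` of the paper is the case `g(z) = e^{-φz}`, restricted to `y < 0`. -/
noncomputable def rightCorrelation (g : ℝ → ℝ) (Θ : ℝ → E) (y : ℝ) : E :=
  ∫ z in Ioi (0 : ℝ), g z • Θ (z - y)

theorem rightCorrelation_eq_integral_indicator_add (g : ℝ → ℝ) (Θ : ℝ → E) {y : ℝ} (hy : y ≤ 0) :
    rightCorrelation g Θ y = ∫ u in Ioi (0 : ℝ), (Ioi 0).indicator g (y + u) • Θ u := by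
  have hsupp : ∀ u ∉ Ioi (0 : ℝ), (Ioi 0).indicator g (y + u) • Θ u = 0 := by
    intro u hu
    have hnot : y + u ∉ Ioi (0 : ℝ) := by
      simp only [mem_Ioi, not_lt] at hu ⊢
      linarith
    rw [indicator_of_notMem hnot, zero_smul]
  rw [setIntegral_eq_integral_of_forall_compl_eq_zero hsupp, rightCorrelation,
    ← integral_indicator measurableSet_Ioi, ← integral_add_left_eq_self _ y]
  simp only [indicator_smul_left, add_sub_cancel_left]

theorem setIntegral_Iio_mul_indicator_add_eq_intervalIntegral (g k : ℝ → ℝ) {u : ℝ} (hu : 0 ≤ u) :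
    ∫ y in Iio (0 : ℝ), k y * (Ioi 0).indicator g (y + u) = ∫ y in -u..0, k y * g (y + u) := by
  have hind : (fun y => k y * (Ioi 0).indicator g (y + u)) =
      (Ioi (-u)).indicator fun y => k y * g (y + u) := by
    ext y
    simp only [indicator, mem_Ioi, neg_lt_iff_pos_add, mul_ite, mul_zero]
  rw [hind, setIntegral_indicator measurableSet_Ioi, Iio_inter_Ioi,
    ← integral_Ioc_eq_integral_Ioo, intervalIntegral.integral_of_le (neg_nonpos.2 hu)]

variable {g k w : ℝ → ℝ} {Θ : ℝ → E}

theorem integrable_mul_indicator_add_smul (hg : IntegrableOn g (Ioi 0))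
    (hk : AEStronglyMeasurable k (volume.restrict (Iio 0)))
    (hΘ : AEStronglyMeasurable Θ (volume.restrict (Ioi 0)))
    (hkw : ∀ u y, -u < y → y < 0 → |k y| ≤ w u)
    (hw : IntegrableOn (fun u => w u • Θ u) (Ioi 0)) :
    Integrable (fun p : ℝ × ℝ => (k p.1 * (Ioi 0).indicator g (p.1 + p.2)) • Θ p.2)
      ((volume.restrict (Iio 0)).prod (volume.restrict (Ioi 0))) := by
  let ν : Measure ℝ := volume.restrict (Ioi 0)
  have hshear : MeasurePreserving (fun p : ℝ × ℝ => (p.1 + p.2, p.2))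
      (volume.prod ν) (volume.prod ν) :=
    measurePreserving_add_prod volume ν
  have hle : (volume.restrict (Iio (0 : ℝ))).prod ν ≤ volume.prod ν :=
    Measure.prod_mono Measure.restrict_le_self le_rfl
  have hg₀ : Integrable ((Ioi 0).indicator g) := hg.integrable_indicator measurableSet_Ioi
  have hdominant : Integrable
      (fun p : ℝ × ℝ => (Ioi 0).indicator g (p.1 + p.2) • w p.2 • Θ p.2) (volume.prod ν) :=
    hshear.integrable_comp_of_integrable (hg₀.smul_prod hw)
  have hg_meas : AEStronglyMeasurable (fun p : ℝ × ℝ => (Ioi 0).indicator g (p.1 + p.2))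
      (volume.prod ν) :=
    hg₀.aestronglyMeasurable.comp_quasiMeasurePreserving
      (Measure.quasiMeasurePreserving_fst.comp hshear.quasiMeasurePreserving)
  refine (hdominant.mono_measure hle).mono
    ((hk.comp_fst.mul (hg_meas.mono_measure hle)).smul hΘ.comp_snd) ?_
  filter_upwards [Measure.quasiMeasurePreserving_fst.ae (ae_restrict_mem measurableSet_Iio)]
    with p hp
  rw [mul_comm, mul_smul, norm_smul, norm_smul]
  by_cases hpos : p.1 + p.2 ∈ Ioi 0
  · have hkp : |k p.1| ≤ |w p.2| :=
      (hkw p.2 p.1 (neg_lt_iff_pos_add.2 hpos) hp).trans (le_abs_self _)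
    rw [norm_smul, norm_smul]
    gcongr
    exact hkp
  · simp only [indicator_of_notMem hpos, norm_zero, zero_mul, zero_smul, le_refl]

theorem setIntegral_smul_rightCorrelation [CompleteSpace E] (hg : IntegrableOn g (Ioi 0))
    (hk : AEStronglyMeasurable k (volume.restrict (Iio 0)))
    (hΘ : AEStronglyMeasurable Θ (volume.restrict (Ioi 0)))
    (hkw : ∀ u y, -u < y → y < 0 → |k y| ≤ w u)
    (hw : IntegrableOn (fun u => w u • Θ u) (Ioi 0)) :
    ∫ y in Iio (0 : ℝ), k y • rightCorrelation g Θ y =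
      ∫ u in Ioi (0 : ℝ), (∫ y in -u..0, k y * g (y + u)) • Θ u :=
  calc
    ∫ y in Iio (0 : ℝ), k y • rightCorrelation g Θ y
      = ∫ y in Iio (0 : ℝ), ∫ u in Ioi (0 : ℝ),
          (k y * (Ioi 0).indicator g (y + u)) • Θ u := by
        refine setIntegral_congr_fun measurableSet_Iio fun y hy => ?_
        simp only [mul_smul]
        rw [integral_smul, rightCorrelation_eq_integral_indicator_add g Θ (le_of_lt hy)]
    _ = ∫ u in Ioi (0 : ℝ), ∫ y in Iio (0 : ℝ),
          (k y * (Ioi 0).indicator g (y + u)) • Θ u :=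
        integral_integral_swap (integrable_mul_indicator_add_smul hg hk hΘ hkw hw)
    _ = ∫ u in Ioi (0 : ℝ), (∫ y in -u..0, k y * g (y + u)) • Θ u := by
        refine setIntegral_congr_fun measurableSet_Ioi fun u hu => ?_
        rw [integral_smul_const,
          setIntegral_Iio_mul_indicator_add_eq_intervalIntegral g k (le_of_lt hu)]

end RightCorrelation

section ExponentialWeight

variable {φ : ℝ}

theorem hasDerivAt_affine_mul_exp_neg (hφ : φ ≠ 0) (b u y : ℝ) :
    HasDerivAt (fun y => -((y + b) / φ + 1 / φ ^ 2) * Real.exp (-φ * (y + u)))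
      ((y + b) * Real.exp (-φ * (y + u))) y := by
  have hexp : HasDerivAt (fun y => Real.exp (-φ * (y + u)))
      (Real.exp (-φ * (y + u)) * (-φ * 1)) y :=
    (((hasDerivAt_id y).add_const u).const_mul (-φ)).exp
  have haff : HasDerivAt (fun y => -((y + b) / φ + 1 / φ ^ 2)) (-(1 / φ)) y :=
    ((((hasDerivAt_id y).add_const b).div_const φ).add_const _).neg
  refine (haff.mul hexp).congr_deriv ?_
  field_simp
  ring

theorem intervalIntegral_add_mul_exp_neg (hφ : φ ≠ 0) (b u : ℝ) :
    ∫ y in -u..0, (y + b) * Real.exp (-φ * (y + u)) =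
      (b / φ + 1 / φ ^ 2) * (1 - Real.exp (-φ * u)) - u / φ := by
  rw [intervalIntegral.integral_eq_sub_of_hasDerivAt
    (fun y _ => hasDerivAt_affine_mul_exp_neg hφ b u y)
    (Continuous.intervalIntegrable (by fun_prop) _ _)]
  simp only [zero_add, neg_add_cancel, mul_zero, Real.exp_zero]
  ring

theorem integral_Ioi_add_mul_exp_neg (hφ : 0 < φ) (b : ℝ) :
    ∫ y in Ioi (0 : ℝ), (y + b) * Real.exp (-φ * y) = b / φ + 1 / φ ^ 2 := by
  have hexp : IntegrableOn (fun y => Real.exp (-φ * y)) (Ioi 0) :=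
    integrableOn_exp_mul_Ioi (neg_lt_zero.2 hφ) 0
  have hid : IntegrableOn (fun y => y * Real.exp (-φ * y)) (Ioi 0) := by
    simpa using integrableOn_rpow_mul_exp_neg_mul_rpow (s := 1) (by norm_num) one_pos hφ
  have hexp_eq : ∫ y in Ioi (0 : ℝ), Real.exp (-φ * y) = 1 / φ := by
    rw [integral_exp_mul_Ioi (neg_lt_zero.2 hφ), mul_zero, Real.exp_zero, neg_div_neg_eq]
  have hid_eq : ∫ y in Ioi (0 : ℝ), y * Real.exp (-φ * y) = 1 / φ ^ 2 := by
    simpa [show (2 : ℝ) - 1 = 1 by norm_num] using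
      Real.integral_rpow_mul_exp_neg_mul_Ioi two_pos hφ
  simp only [add_mul]
  rw [integral_add hid (hexp.const_mul b), integral_const_mul, hexp_eq, hid_eq]
  ring

variable {E : Type*} [NormedAddCommGroup E] [NormedSpace ℝ E] {Θ : ℝ → E}

theorem integrableOn_exp_neg_smul (hφ : 0 ≤ φ) (hΘ : IntegrableOn Θ (Ioi 0)) :
    IntegrableOn (fun u => Real.exp (-φ * u) • Θ u) (Ioi 0) := by
  refine Integrable.mono hΘ ((Measurable.aestronglyMeasurable (by fun_prop)).smul
    hΘ.aestronglyMeasurable) ?_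
  filter_upwards [ae_restrict_mem measurableSet_Ioi] with u hu
  rw [norm_smul, Real.norm_of_nonneg (Real.exp_pos _).le]
  refine mul_le_of_le_one_left (norm_nonneg _) (Real.exp_le_one_iff.2 ?_)
  exact mul_nonpos_of_nonpos_of_nonneg (neg_nonpos.2 hφ) (le_of_lt hu)

theorem setIntegral_add_smul_rightCorrelation_exp_neg [CompleteSpace E] (hφ : 0 < φ)
    (hΘ : IntegrableOn Θ (Ioi 0)) (hΘ_id : IntegrableOn (fun u => u • Θ u) (Ioi 0)) (b : ℝ) :
    ∫ y in Iio (0 : ℝ), (y + b) • rightCorrelation (fun z => Real.exp (-φ * z)) Θ y =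
      (b / φ + 1 / φ ^ 2) •
          ((∫ u in Ioi (0 : ℝ), Θ u) - ∫ u in Ioi (0 : ℝ), Real.exp (-φ * u) • Θ u) -
        (1 / φ) • ∫ u in Ioi (0 : ℝ), u • Θ u := by
  have hexp : IntegrableOn (fun u => Real.exp (-φ * u) • Θ u) (Ioi 0) :=
    integrableOn_exp_neg_smul hφ.le hΘ
  have hbound : ∀ u y : ℝ, -u < y → y < 0 → |y + b| ≤ u + |b| := by
    intro u y huy hy
    refine (abs_add_le y b).trans (add_le_add_left ?_ _)
    rw [abs_of_neg hy]
    linarith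
  have hdominant : IntegrableOn (fun u => (u + |b|) • Θ u) (Ioi 0) := by
    simp only [add_smul]
    exact hΘ_id.add (hΘ.smul |b|)
  have hsplit : ∀ u, (∫ y in -u..0, (y + b) * Real.exp (-φ * (y + u))) • Θ u =
      (b / φ + 1 / φ ^ 2) • (Θ u - Real.exp (-φ * u) • Θ u) - (1 / φ) • u • Θ u := by
    intro u
    rw [intervalIntegral_add_mul_exp_neg hφ.ne']
    module
  rw [setIntegral_smul_rightCorrelation (integrableOn_exp_mul_Ioi (neg_lt_zero.2 hφ) 0)
    (by fun_prop) hΘ.aestronglyMeasurable hbound hdominant]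
  simp only [hsplit]
  rw [integral_sub (by exact (hΘ.sub hexp).smul _) (by exact hΘ_id.smul _), integral_smul,
    integral_smul, integral_sub hΘ hexp]

end ExponentialWeight

theorem stmt7_general
    (q δ β Φ φ : ℝ) (hq : q ≠ 0) (hδ : δ ≠ 0) (hΦ : Φ ≠ 0) (hφ : 0 < φ)
    (Θ h G I : ℝ → ℝ)
    (hG : ∀ y ∈ Iio (0 : ℝ), G y = ∫ z in Ioi (0 : ℝ), Real.exp (-φ * z) * Θ (z - y))
    (hI : ∀ b : ℝ, I b =
      (φ - Φ) / φ * (∫ y in Ioi (0 : ℝ), deriv h (y + b) * Real.exp (-φ * y))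
      + δ * ((∫ y in Iio (0 : ℝ), deriv h (y + b) * G y) - β * Φ / φ))
    (W₀ m : ℝ)
    (hΘ_integral : ∫ u in Ioi (0 : ℝ), Θ u = Φ / q - W₀)
    (hΘ_laplace : ∫ u in Ioi (0 : ℝ), Real.exp (-φ * u) * Θ u = (φ - Φ) / (δ * φ) - W₀)
    (hΘ_moment : ∫ u in Ioi (0 : ℝ), u * Θ u = (Φ / q) * m)
    (hΘ_int : IntegrableOn Θ (Ioi 0))
    (hΘ_id_int : IntegrableOn (fun u => u * Θ u) (Ioi 0))
    (α : ℝ) (hα : α ≠ 0) (hquad : ∀ y : ℝ, h y = α * y ^ 2) (b : ℝ) :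
    I b = (2 * α * δ * Φ / (q * φ)) * (b - (β * q / (2 * α) + m - 1 / φ)) ∧
      (I b = 0 ↔ b = β * q / (2 * α) + m - 1 / φ) := by
  have hderiv : ∀ y, deriv h y = 2 * α * y := by
    intro y
    rw [funext hquad, deriv_const_mul_field, deriv_pow_field]
    ring
  have hright : ∫ y in Ioi (0 : ℝ), deriv h (y + b) * Real.exp (-φ * y) =
      2 * α * (b / φ + 1 / φ ^ 2) := by
    simp only [hderiv, mul_assoc (2 * α)]
    rw [integral_const_mul, integral_Ioi_add_mul_exp_neg hφ]
  have hleft : ∫ y in Iio (0 : ℝ), deriv h (y + b) * G y =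
      2 * α * ((b / φ + 1 / φ ^ 2) * (Φ / q - (φ - Φ) / (δ * φ)) - 1 / φ * (Φ / q * m)) := by
    have hcorr := setIntegral_add_smul_rightCorrelation_exp_neg hφ hΘ_int hΘ_id_int b
    simp only [smul_eq_mul, hΘ_integral, hΘ_laplace, hΘ_moment, sub_sub_sub_cancel_right] at hcorr
    rw [← hcorr, ← integral_const_mul]
    refine setIntegral_congr_fun measurableSet_Iio fun y hy => ?_
    simp only [hderiv, hG y hy, rightCorrelation, smul_eq_mul, mul_assoc]
  have hformula : I b =
      (2 * α * δ * Φ / (q * φ)) * (b - (β * q / (2 * α) + m - 1 / φ)) := by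
    rw [hI, hright, hleft]
    field_simp
    ring
  have hslope : 2 * α * δ * Φ / (q * φ) ≠ 0 := by positivity
  exact ⟨hformula, by rw [hformula, mul_eq_zero, or_iff_right hslope, sub_eq_zero]⟩

/-- Example 3.2: for the quadratic cost `h(y) = α y²`,
`I(b) = (2αδΦ/(qφ)) (b - (βq/(2α) + m - 1/φ))`, so `I(b) = 0` iff
`b = βq/(2α) + m - 1/φ`. -/
theorem stmt7
    (q δ β Φ φ : ℝ)
    (hq : 0 < q) (hδ : 0 < δ) (hΦ : 0 < Φ) (hΦφ : Φ < φ)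
    (Θ : ℝ → ℝ) (hΘmeas : Measurable Θ) (hΘnn : ∀ u ∈ Set.Ioi (0 : ℝ), 0 ≤ Θ u)
    (h : ℝ → ℝ) (hconv : ConvexOn ℝ Set.univ h) (hdiff : Differentiable ℝ h)
    (G : ℝ → ℝ)
    (hG : ∀ y ∈ Set.Iio (0 : ℝ),
      G y = ∫ z in Set.Ioi (0 : ℝ), Real.exp (-φ * z) * Θ (z - y))
    (hint1 : ∀ b : ℝ,
      IntegrableOn (fun y => deriv h (y + b) * Real.exp (-φ * y)) (Set.Ioi 0))
    (hint2 : ∀ b : ℝ,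
      IntegrableOn (fun y => deriv h (y + b) * G y) (Set.Iio 0))
    (I : ℝ → ℝ)
    (hI : ∀ b : ℝ, I b =
      (φ - Φ) / φ * (∫ y in Set.Ioi (0 : ℝ), deriv h (y + b) * Real.exp (-φ * y))
      + δ * ((∫ y in Set.Iio (0 : ℝ), deriv h (y + b) * G y) - β * Φ / φ))
    (W₀ m : ℝ)
    (hΘ1 : ∫ u in Set.Ioi (0 : ℝ), Θ u = Φ / q - W₀)
    (hΘ2 : ∫ u in Set.Ioi (0 : ℝ), Real.exp (-φ * u) * Θ u = (φ - Φ) / (δ * φ) - W₀)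
    (hΘ3 : ∫ u in Set.Ioi (0 : ℝ), u * Θ u = (Φ / q) * m)
    (hΘint : IntegrableOn Θ (Set.Ioi 0))
    (hΘint3 : IntegrableOn (fun u => u * Θ u) (Set.Ioi 0))
    (α : ℝ) (hα : 0 < α)
    (hquad : ∀ y : ℝ, h y = α * y ^ 2) :
    ∀ b : ℝ,
      I b = (2 * α * δ * Φ / (q * φ)) * (b - (β * q / (2 * α) + m - 1 / φ)) ∧
      (I b = 0 ↔ b = β * q / (2 * α) + m - 1 / φ) :=
  stmt7_general q δ β Φ φ hq.ne' hδ.ne' hΦ.ne' (hΦ.trans hΦφ) Θ h G I hG hI W₀ m hΘ1 hΘ2 hΘ3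
    hΘint hΘint3 α hα.ne' hquad
end

section
/- Let X : [0,∞) → ℝ be a càdlàg function with X_0 = 0, let b ∈ ℝ and δ > 0. Suppose x ≤ y are reals and U^x, U^y : [0,∞) → ℝ are càdlàg functions satisfying U^x_t = x + X_t − δ ∫_0^t 1_{\{U^x_s > b\}} ds and U^y_t = y + X_t − δ ∫_0^t 1_{\{U^y_s > b\}} ds for all t ≥ 0. Then U^x_t ≤ U^y_t for all t ≥ 0. -/
open MeasureTheory Set Filter

/-!
The common forcing cancels in the difference `W = U - V`, which is therefore continuous even where
`U` and `V` jump. After the last time at which `W ≤ 0` one has `V < U`, so a refraction rate that is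
monotone in the level pulls `U` down at least as strongly as `V`, and `W` cannot become positive.
-/

lemma exists_mem_Icc_le_forall_Ioc_lt {α β : Type*}
    [ConditionallyCompleteLinearOrder α] [TopologicalSpace α] [OrderTopology α]
    [LinearOrder β] [TopologicalSpace β] [OrderClosedTopology β]
    {f : α → β} {a b : α} {c : β} (hab : a ≤ b) (hf : ContinuousOn f (Icc a b)) (hfa : f a ≤ c) :
    ∃ s ∈ Icc a b, f s ≤ c ∧ ∀ u ∈ Ioc s b, c < f u := by
  have hclosed : IsClosed (Icc a b ∩ f ⁻¹' Iic c) :=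
    hf.preimage_isClosed_of_isClosed isClosed_Icc isClosed_Iic
  have hcompact : IsCompact (Icc a b ∩ f ⁻¹' Iic c) :=
    isCompact_Icc.of_isClosed_subset hclosed inter_subset_left
  obtain ⟨s, ⟨hs, hfs⟩, hlast⟩ := hcompact.exists_isGreatest ⟨a, left_mem_Icc.2 hab, hfa⟩
  refine ⟨s, hs, hfs, fun u hu ↦ lt_of_not_ge fun hfu ↦ hu.1.not_ge ?_⟩
  exact hlast ⟨⟨hs.1.trans hu.1.le, hu.2⟩, hfu⟩

lemma nonpos_of_eq_add_integral {μ : Measure ℝ} [NullSingletonClass μ] {W h : ℝ → ℝ} {a t c : ℝ}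
    (hat : a ≤ t) (hc : c ≤ 0) (hh : IntervalIntegrable h μ a t)
    (hW : ∀ s ∈ Icc a t, W s = c + ∫ u in a..s, h u ∂μ)
    (hsign : ∀ s ∈ Icc a t, 0 < W s → h s ≤ 0) :
    W t ≤ 0 := by
  have hprimitive : ContinuousOn (fun s ↦ ∫ u in a..s, h u ∂μ) (Icc a t) := by
    simpa only [uIcc_of_le hat] using
      intervalIntegral.continuousOn_primitive_interval' hh left_mem_uIcc
  have hcont : ContinuousOn W (Icc a t) := (continuousOn_const.add hprimitive).congr hW
  have hWa : W a ≤ 0 := by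
    simpa only [hW a (left_mem_Icc.2 hat), intervalIntegral.integral_same, add_zero] using hc
  obtain ⟨s, hs, hWs, hpos⟩ := exists_mem_Icc_le_forall_Ioc_lt hat hcont hWa
  have hincrement : ∫ u in s..t, h u ∂μ ≤ 0 := by
    rw [intervalIntegral.integral_of_le hs.2]
    exact setIntegral_nonpos measurableSet_Ioc fun u hu ↦
      hsign u ⟨hs.1.trans hu.1.le, hu.2⟩ (hpos u hu)
  have hsplit : (∫ u in a..s, h u ∂μ) + ∫ u in s..t, h u ∂μ = ∫ u in a..t, h u ∂μ :=
    have hsmem : s ∈ uIcc a t := Icc_subset_uIcc hs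
    intervalIntegral.integral_add_adjacent_intervals
      (hh.mono_set (uIcc_subset_uIcc_left hsmem)) (hh.mono_set (uIcc_subset_uIcc_right hsmem))
  calc
    W t = W s + ∫ u in s..t, h u ∂μ := by
      rw [hW t (right_mem_Icc.2 hat), hW s hs, ← hsplit, add_assoc]
    _ ≤ 0 := add_nonpos hWs hincrement

lemma aemeasurable_restrict_Ici_of_continuousWithinAt_Ici {α E : Type*}
    [LinearOrder α] [TopologicalSpace α] [OrderTopology α] [SecondCountableTopology α]
    [MeasurableSpace α] [BorelSpace α] [TopologicalSpace E] [MeasurableSpace E] [BorelSpace E]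
    {μ : Measure α} {U : α → E} {a : α}
    (hU : ∀ t, a ≤ t → ContinuousWithinAt U (Ici t) t) :
    AEMeasurable U (μ.restrict (Ici a)) := by
  have hpreimage (O : Set E) (hO : IsOpen O) : MeasurableSet (Ici a ∩ U ⁻¹' O) := by
    refine .of_mem_nhdsGT fun t ht ↦ ?_
    have hO_right : ∀ᶠ u in nhdsWithin t (Ioi t), U u ∈ O :=
      ((hU t ht.1).mono Ioi_subset_Ici_self).eventually (hO.mem_nhds ht.2)
    filter_upwards [hO_right, self_mem_nhdsWithin] with u huO htu
    exact ⟨ht.1.trans htu.le, huO⟩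
  refine aemeasurable_restrict_of_measurable_subtype measurableSet_Ici ?_
  refine measurable_of_isOpen fun O hO ↦ ?_
  convert measurable_subtype_coe (hpreimage O hO) using 1
  ext u
  simp

lemma intervalIntegrable_comp_of_norm_le {E F : Type*}
    [TopologicalSpace E] [MeasurableSpace E] [BorelSpace E] [NormedAddCommGroup F]
    {μ : Measure ℝ} [IsLocallyFiniteMeasure μ] {U : ℝ → E} {g : E → F} {a t C : ℝ}
    (hU : ∀ s, a ≤ s → ContinuousWithinAt U (Ici s) s) (hg : StronglyMeasurable g)
    (hC : ∀ z, ‖g z‖ ≤ C) (hat : a ≤ t) :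
    IntervalIntegrable (fun s ↦ g (U s)) μ a t := by
  have hUmeas : AEMeasurable U (μ.restrict (Ioc a t)) :=
    (aemeasurable_restrict_Ici_of_continuousWithinAt_Ici hU).mono_measure
      (Measure.restrict_mono_set μ (Ioc_subset_Icc_self.trans Icc_subset_Ici_self))
  rw [intervalIntegrable_iff_integrableOn_Ioc_of_le hat]
  exact IntegrableOn.of_bound measure_Ioc_lt_top
    (hg.aestronglyMeasurable.comp_aemeasurable hUmeas) C (ae_of_all _ fun s ↦ hC (U s))

lemma intervalIntegrable_indicator_const_comp {E F : Type*}
    [TopologicalSpace E] [MeasurableSpace E] [BorelSpace E] [NormedAddCommGroup F]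
    {μ : Measure ℝ} [IsLocallyFiniteMeasure μ] {U : ℝ → E} {a t : ℝ}
    (hU : ∀ s, a ≤ s → ContinuousWithinAt U (Ici s) s) {S : Set E} (hS : MeasurableSet S) (c : F)
    (hat : a ≤ t) :
    IntervalIntegrable (fun s ↦ S.indicator (fun _ ↦ c) (U s)) μ a t :=
  intervalIntegrable_comp_of_norm_le hU (stronglyMeasurable_const.indicator hS)
    (fun _ ↦ norm_indicator_le_norm_self _ _) hat

lemma monotone_indicator_Ioi_const {α β : Type*} [LinearOrder α] [Zero β] [Preorder β] (b : α)
    {c : β} (hc : 0 ≤ c) : Monotone ((Ioi b).indicator fun _ ↦ c) := by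
  intro u v huv
  by_cases hu : b < u
  · simp [hu, hu.trans_le huv]
  · simpa [hu] using indicator_apply_nonneg fun _ ↦ hc

theorem stmt10_general {μ : Measure ℝ} [NullSingletonClass μ]
    {φ : ℝ → ℝ → ℝ} (hφ : ∀ s, Monotone (φ s)) {X U V : ℝ → ℝ} {x y : ℝ} (hxy : x ≤ y)
    (hU_int : ∀ t, 0 ≤ t → IntervalIntegrable (fun s ↦ φ s (U s)) μ 0 t)
    (hV_int : ∀ t, 0 ≤ t → IntervalIntegrable (fun s ↦ φ s (V s)) μ 0 t)
    (hU : ∀ t, 0 ≤ t → U t = x + X t - ∫ s in (0 : ℝ)..t, φ s (U s) ∂μ)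
    (hV : ∀ t, 0 ≤ t → V t = y + X t - ∫ s in (0 : ℝ)..t, φ s (V s) ∂μ) :
    ∀ t, 0 ≤ t → U t ≤ V t := by
  intro t ht
  have hdiff (s : ℝ) (hs : s ∈ Icc 0 t) :
      U s - V s = (x - y) + ∫ u in (0 : ℝ)..s, (φ u (V u) - φ u (U u)) ∂μ := by
    rw [intervalIntegral.integral_sub (hV_int s hs.1) (hU_int s hs.1), hU s hs.1, hV s hs.1]
    ring
  have hsign (s : ℝ) (_ : s ∈ Icc 0 t) (hpos : 0 < U s - V s) : φ s (V s) - φ s (U s) ≤ 0 :=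
    sub_nonpos.2 (hφ s (sub_pos.1 hpos).le)
  exact sub_nonpos.1 <| nonpos_of_eq_add_integral (W := fun s ↦ U s - V s) ht (sub_nonpos.2 hxy)
    ((hV_int t ht).sub (hU_int t ht)) hdiff hsign

/-- pathwise comparison of refracted trajectories driven by the same
càdlàg path `X`, refraction level `b` and rate `δ`, started from ordered points. -/
theorem stmt10
    (X : ℝ → ℝ) (b δ : ℝ) (hδ : 0 < δ)
    (hX0 : X 0 = 0)
    (hX_rc : ∀ t : ℝ, 0 ≤ t → ContinuousWithinAt X (Set.Ici t) t)
    (hX_ll : ∀ t : ℝ, 0 < t → ∃ l : ℝ, Tendsto X (nhdsWithin t (Set.Iio t)) (nhds l))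
    (x y : ℝ) (hxy : x ≤ y)
    (Ux Uy : ℝ → ℝ)
    (hUx_rc : ∀ t : ℝ, 0 ≤ t → ContinuousWithinAt Ux (Set.Ici t) t)
    (hUx_ll : ∀ t : ℝ, 0 < t → ∃ l : ℝ, Tendsto Ux (nhdsWithin t (Set.Iio t)) (nhds l))
    (hUy_rc : ∀ t : ℝ, 0 ≤ t → ContinuousWithinAt Uy (Set.Ici t) t)
    (hUy_ll : ∀ t : ℝ, 0 < t → ∃ l : ℝ, Tendsto Uy (nhdsWithin t (Set.Iio t)) (nhds l))
    (hUx : ∀ t : ℝ, 0 ≤ t →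
      Ux t = x + X t - δ * ∫ s in (0 : ℝ)..t, Set.indicator {u : ℝ | b < Ux u} (fun _ => (1 : ℝ)) s)
    (hUy : ∀ t : ℝ, 0 ≤ t →
      Uy t = y + X t - δ * ∫ s in (0 : ℝ)..t, Set.indicator {u : ℝ | b < Uy u} (fun _ => (1 : ℝ)) s) :
    ∀ t : ℝ, 0 ≤ t → Ux t ≤ Uy t :=
  stmt10_general (μ := volume) (φ := fun _ u ↦ δ * (Ioi b).indicator (fun _ ↦ 1) u)
    (fun _ ↦ (monotone_indicator_Ioi_const b zero_le_one).const_mul hδ.le) hxy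
    (fun _ ht ↦ (intervalIntegrable_indicator_const_comp hUx_rc measurableSet_Ioi 1 ht).const_mul δ)
    (fun _ ht ↦ (intervalIntegrable_indicator_const_comp hUy_rc measurableSet_Ioi 1 ht).const_mul δ)
    (by simp only [intervalIntegral.integral_const_mul]; exact hUx)
    (by simp only [intervalIntegral.integral_const_mul]; exact hUy)
end

section
/- Let b* ∈ ℝ, α > 0 and ε̄ > 0, and let (I_n) be a sequence of nondecreasing functions ℝ → ℝ such that: (i) for all n and all b*, b′ with b* − ε̄ < b′ ≤ b < b* + ε̄, I_n(b) − I_n(b′) ≥ α (b − b′); and (ii) I_n(b*) → 0 as n → ∞. If (b_n) is a sequence of reals with I_n(b_n) = 0 for every n, then b_n → b*. -/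
open Filter

/- Clamping `x` to `[c - r, c + r]` keeps it between `c` and `x`, so a nondecreasing `f` moves at
least as much from `c` to `x` as from `c` to the clamped point, where the growth bound applies:
`α * min |x - c| r ≤ |f x - f c|`. For `f = I n`, `c = bstar` and `x = b n` the right-hand side is
`|I n bstar| → 0`, and a distance truncated at `r > 0` tends to `0` only if the distance does. -/

open Set Topology

theorem exists_mem_uIcc_abs_sub_eq_min {G : Type*} [AddCommGroup G] [LinearOrder G]
    [IsOrderedAddMonoid G] {r : G} (hr : 0 ≤ r) (c x : G) :
    ∃ y ∈ uIcc c x, |y - c| = min |x - c| r := by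
  rcases le_total |x - c| r with hxr | hrx
  · exact ⟨x, right_mem_uIcc, (min_eq_left hxr).symm⟩
  rw [min_eq_right hrx]
  rcases le_total c x with hcx | hxc
  · rw [abs_of_nonneg (sub_nonneg.2 hcx), le_sub_iff_add_le'] at hrx
    exact ⟨c + r, mem_uIcc_of_le (le_add_of_nonneg_right hr) hrx, by simp [abs_of_nonneg hr]⟩
  · rw [abs_sub_comm, abs_of_nonneg (sub_nonneg.2 hxc), le_sub_comm] at hrx
    exact ⟨c - r, mem_uIcc_of_ge hrx (sub_le_self c hr), by simp [abs_of_nonneg hr]⟩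

theorem tendsto_of_tendsto_min_const {ι X : Type*} [LinearOrder X] [TopologicalSpace X]
    [ClosedIciTopology X] {l : Filter ι} {u : ι → X} {a r : X} (har : a < r)
    (hu : Tendsto (fun i ↦ min (u i) r) l (𝓝 a)) : Tendsto u l (𝓝 a) := by
  refine hu.congr' ?_
  filter_upwards [hu.eventually_lt_const har] with i hi
  exact min_eq_left ((min_lt_iff.1 hi).resolve_right (lt_irrefl r)).le

section OrderedRing

variable {R : Type*} [Ring R] [LinearOrder R] [IsOrderedRing R]

theorem mul_abs_sub_le_abs_sub_of_mul_sub_le {f : R → R} {s : Set R} {α : R}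
    (hf : ∀ x ∈ s, ∀ y ∈ s, y ≤ x → α * (x - y) ≤ f x - f y)
    {x y : R} (hx : x ∈ s) (hy : y ∈ s) : α * |x - y| ≤ |f x - f y| := by
  rcases le_total y x with hyx | hxy
  · rw [abs_of_nonneg (sub_nonneg.2 hyx)]
    exact (hf x hx y hy hyx).trans (le_abs_self _)
  · rw [abs_sub_comm x, abs_sub_comm (f x), abs_of_nonneg (sub_nonneg.2 hxy)]
    exact (hf y hy x hx hxy).trans (le_abs_self _)

theorem mul_min_abs_sub_le_abs_sub_of_monotone {f : R → R} (hf : Monotone f) {α c r : R}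
    (hr : 0 ≤ r) (hgrowth : ∀ y ∈ Icc (c - r) (c + r), α * |y - c| ≤ |f y - f c|) (x : R) :
    α * min |x - c| r ≤ |f x - f c| := by
  obtain ⟨y, hy_between, hy_dist⟩ := exists_mem_uIcc_abs_sub_eq_min hr c x
  have hy_near : y ∈ Icc (c - r) (c + r) := by
    rw [← mem_Icc_iff_abs_le, abs_sub_comm, hy_dist]
    exact min_le_right _ _
  calc α * min |x - c| r = α * |y - c| := by rw [hy_dist]
    _ ≤ |f y - f c| := hgrowth y hy_near
    _ ≤ |f x - f c| := abs_sub_left_of_mem_uIcc (hf.mapsTo_uIcc hy_between)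

end OrderedRing

theorem stmt14_general {𝕜 ι : Type*} [Field 𝕜] [LinearOrder 𝕜] [IsStrictOrderedRing 𝕜]
    [TopologicalSpace 𝕜] [OrderTopology 𝕜] {l : Filter ι} {f : ι → 𝕜 → 𝕜}
    {x : ι → 𝕜} {α c r : 𝕜} (hα : 0 < α) (hr : 0 < r)
    (hmono : ∀ᶠ i in l, Monotone (f i))
    (hgrowth : ∀ᶠ i in l, ∀ y ∈ Ioo (c - r) (c + r), α * |y - c| ≤ |f i y - f i c|)
    (hlim : Tendsto (fun i ↦ f i (x i) - f i c) l (𝓝 0)) :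
    Tendsto x l (𝓝 c) := by
  have hr_half : 0 < r / 2 := half_pos hr
  have hIcc : Icc (c - r / 2) (c + r / 2) ⊆ Ioo (c - r) (c + r) :=
    Icc_subset_Ioo (by linarith) (by linarith)
  have hbound : ∀ᶠ i in l, min |x i - c| (r / 2) ≤ |f i (x i) - f i c| / α := by
    filter_upwards [hmono, hgrowth] with i hmono_i hgrowth_i
    rw [le_div_iff₀' hα]
    exact mul_min_abs_sub_le_abs_sub_of_monotone hmono_i hr_half.le
      (fun y hy ↦ hgrowth_i y (hIcc hy)) (x i)
  have hratio : Tendsto (fun i ↦ |f i (x i) - f i c| / α) l (𝓝 0) := by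
    simpa only [abs_zero, zero_div] using hlim.abs.div_const α
  have hmin : Tendsto (fun i ↦ min |x i - c| (r / 2)) l (𝓝 0) :=
    tendsto_of_tendsto_of_tendsto_of_le_of_le' tendsto_const_nhds hratio
      (.of_forall fun i ↦ le_min (abs_nonneg _) hr_half.le) hbound
  rw [← tendsto_sub_nhds_zero_iff, tendsto_zero_iff_abs_tendsto_zero]
  exact tendsto_of_tendsto_min_const hr_half hmin

/-- real-analytic core of Proposition 5.2: roots of the monotone
functions `I_n` converge to the root `b*` of the limit function. -/
theorem stmt14
    (bstar α εbar : ℝ) (hα : 0 < α) (hε : 0 < εbar)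
    (I : ℕ → ℝ → ℝ)
    (hmono : ∀ n, Monotone (I n))
    (hlower : ∀ n : ℕ, ∀ b b' : ℝ,
      bstar - εbar < b' → b' ≤ b → b < bstar + εbar →
      α * (b - b') ≤ I n b - I n b')
    (hIb : Tendsto (fun n => I n bstar) atTop (nhds 0))
    (b : ℕ → ℝ) (hroot : ∀ n, I n (b n) = 0) :
    Tendsto b atTop (nhds bstar) :=
  stmt14_general hα hε (.of_forall hmono)
    (.of_forall fun n _ hy ↦ mul_abs_sub_le_abs_sub_of_mul_sub_le
      (fun u hu v hv hvu ↦ hlower n u v hv.1 hvu hu.2) hy (by simpa using hε))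
    (by simpa [hroot] using hIb.neg)
end

section
/- Let φ > 0 and let h : ℝ → ℝ be convex and differentiable with ∫_0^∞ |h′(y+b)| e^{−φy} dy < ∞ for every b ∈ ℝ. Define J(b) := ∫_0^∞ h′(y+b) e^{−φy} dy. Then for all reals b₁ ≤ b₂ and every ε > 0, J(b₁ + ε) − J(b₁) ≥ e^{−φ (b₂ − b₁)} ( J(b₂ + ε) − J(b₂) ). -/
open MeasureTheory Set Filter

/-!
Put `L b = ∫₀^∞ e^{-φy} g(y+b) dy`. Translation gives `e^{-φc} L(b+c) = ∫_c^∞ e^{-φy} g(y+b) dy`, so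
for `c ≥ 0` and `g ≥ 0` moving the base point from `b` to `b + c` and discounting by `e^{-φc}` only
discards part of the domain of integration of a nonnegative function. Since `L` is linear in `g`,
its increment over `ε` is the same transform of `x ↦ g(x+ε) - g x`, which is nonnegative when `g` is
monotone, as the derivative of a convex function is.
-/

section ShiftedLaplace

variable {E : Type*} [NormedAddCommGroup E] [NormedSpace ℝ E]

theorem setIntegral_Ioi_comp_add_right (f : ℝ → E) (a c : ℝ) :
    ∫ y in Ioi a, f (y + c) = ∫ x in Ioi (a + c), f x := by
  simpa only [preimage_add_const_Ioi, add_sub_cancel_right] using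
    (measurePreserving_add_right volume c).setIntegral_preimage_emb
      (measurableEmbedding_addRight c) f (Ioi (a + c))

/-- The Laplace transform at the fixed rate `φ` of the translate `y ↦ g (y + b)`, as a function of
the base point `b`. For `g = h'` it is the function `J` of the theorem. The value is `0` when the
integrand is not integrable. -/
noncomputable def shiftedLaplace (φ : ℝ) (g : ℝ → E) (b : ℝ) : E :=
  ∫ y in Ioi 0, Real.exp (-φ * y) • g (y + b)

theorem exp_smul_shiftedLaplace_add (φ : ℝ) (g : ℝ → E) (b c : ℝ) :
    Real.exp (-φ * c) • shiftedLaplace φ g (b + c) =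
      ∫ y in Ioi c, Real.exp (-φ * y) • g (y + b) := by
  have discount (y : ℝ) : Real.exp (-φ * c) • Real.exp (-φ * y) • g (y + (b + c)) =
      Real.exp (-φ * (y + c)) • g (y + c + b) := by
    rw [smul_smul, ← Real.exp_add, ← mul_add, add_comm c y, add_comm b c, add_assoc y c b]
  calc Real.exp (-φ * c) • shiftedLaplace φ g (b + c)
      = ∫ y in Ioi 0, Real.exp (-φ * (y + c)) • g (y + c + b) := by
        simp only [shiftedLaplace, ← integral_smul, discount]
    _ = ∫ y in Ioi c, Real.exp (-φ * y) • g (y + b) := by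
        rw [setIntegral_Ioi_comp_add_right (fun y => Real.exp (-φ * y) • g (y + b)), zero_add]

theorem shiftedLaplace_sub_translate {φ : ℝ} {g : ℝ → E} {b ε : ℝ}
    (hint_add : IntegrableOn (fun y => Real.exp (-φ * y) • g (y + (b + ε))) (Ioi 0))
    (hint : IntegrableOn (fun y => Real.exp (-φ * y) • g (y + b)) (Ioi 0)) :
    shiftedLaplace φ (fun x => g (x + ε) - g x) b =
      shiftedLaplace φ g (b + ε) - shiftedLaplace φ g b := by
  simp only [shiftedLaplace, smul_sub, add_assoc]
  exact integral_sub hint_add hint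

variable [PartialOrder E] [IsOrderedAddMonoid E] [IsOrderedModule ℝ E] [OrderClosedTopology E]

theorem exp_smul_shiftedLaplace_add_le {φ : ℝ} {g : ℝ → E} {b c : ℝ} (hg : 0 ≤ g) (hc : 0 ≤ c)
    (hint : IntegrableOn (fun y => Real.exp (-φ * y) • g (y + b)) (Ioi 0)) :
    Real.exp (-φ * c) • shiftedLaplace φ g (b + c) ≤ shiftedLaplace φ g b := by
  rw [exp_smul_shiftedLaplace_add]
  exact setIntegral_mono_set hint
    (Eventually.of_forall fun y => smul_nonneg (Real.exp_nonneg _) (hg (y + b)))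
    (Ioi_subset_Ioi hc).eventuallyLE

theorem stmt15_general {φ : ℝ} {g : ℝ → E} (hg : Monotone g)
    (hint : ∀ b : ℝ, IntegrableOn (fun y => Real.exp (-φ * y) • g (y + b)) (Ioi 0))
    {b₁ b₂ ε : ℝ} (hb : b₁ ≤ b₂) (hε : 0 ≤ ε) :
    Real.exp (-φ * (b₂ - b₁)) • (shiftedLaplace φ g (b₂ + ε) - shiftedLaplace φ g b₂) ≤
      shiftedLaplace φ g (b₁ + ε) - shiftedLaplace φ g b₁ := by
  have increment_nonneg : 0 ≤ fun x => g (x + ε) - g x :=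
    fun x => sub_nonneg.2 (hg (le_add_of_nonneg_right hε))
  have increment_integrable :
      IntegrableOn (fun y => Real.exp (-φ * y) • (g (y + b₁ + ε) - g (y + b₁))) (Ioi 0) := by
    simpa only [smul_sub, add_assoc] using! (hint (b₁ + ε)).sub (hint b₁)
  simpa only [add_sub_cancel, shiftedLaplace_sub_translate (hint _) (hint _)] using
    exp_smul_shiftedLaplace_add_le increment_nonneg (sub_nonneg.2 hb) increment_integrable

end ShiftedLaplace

/-- the increment form of the derivative bound
`J(b₁+ε) - J(b₁) ≥ e^{-φ(b₂-b₁)} (J(b₂+ε) - J(b₂))` for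
`J(b) = ∫_0^∞ h'(y+b) e^{-φy} dy` with `h` convex. -/
theorem stmt15
    (φ : ℝ) (hφ : 0 < φ)
    (h : ℝ → ℝ) (hconv : ConvexOn ℝ Set.univ h) (hdiff : Differentiable ℝ h)
    (hint : ∀ b : ℝ,
      IntegrableOn (fun y => deriv h (y + b) * Real.exp (-φ * y)) (Set.Ioi 0))
    (J : ℝ → ℝ)
    (hJ : ∀ b : ℝ, J b = ∫ y in Set.Ioi (0 : ℝ), deriv h (y + b) * Real.exp (-φ * y)) :
    ∀ b₁ b₂ : ℝ, b₁ ≤ b₂ → ∀ ε : ℝ, 0 < ε →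
      Real.exp (-φ * (b₂ - b₁)) * (J (b₂ + ε) - J b₂) ≤ J (b₁ + ε) - J b₁ := by
  intro b₁ b₂ hb ε hε
  have deriv_mono : Monotone (deriv h) :=
    monotoneOn_univ.1 (hconv.monotoneOn_deriv fun x _ => hdiff x)
  have J_eq : J = shiftedLaplace φ (deriv h) :=
    funext fun b => by simp only [hJ, shiftedLaplace, smul_eq_mul, mul_comm]
  rw [J_eq]
  exact stmt15_general deriv_mono
    (fun b => by simpa only [smul_eq_mul, mul_comm] using hint b) hb hε.le
end

section
/- Let a, b ∈ ℝ, let (f_n) be a sequence of convex differentiable functions ℝ → ℝ, and let f : ℝ → ℝ be convex and differentiable. Suppose that f_n(x) ≥ f(x) for all x ∈ ℝ and all n, that f_n(a) → f(a), and that f_n′(z) → f′(z) for every z ≠ b. Then f_n(x) → f(x) for every x ≥ a. -/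
open Filter

/-!
A function that is continuous and right differentiable is recovered from its value at `a` by
integrating its right derivative. The right derivatives of convex functions are monotone, so their
convergence at one point on each side of `[a, x]` bounds them all uniformly on `[a, x]`. Dominated
convergence, which tolerates a null set of exceptional points, then gives convergence of the
increments from `a` to `x`.
-/

open Set MeasureTheory Topology Interval

section MonotoneLimits

lemma exists_mem_inter_of_ae_of_mem_closure {X : Type*} [TopologicalSpace X] [MeasurableSpace X]
    {μ : Measure X} [μ.IsOpenPosMeasure] {s t : Set X} {a : X} {P : X → Prop} (hs : IsOpen s)
    (ht : IsOpen t) (has : a ∈ s) (hat : a ∈ closure t) (hP : ∀ᵐ y ∂μ, y ∈ s → P y) :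
    ∃ y ∈ s ∩ t, P y := by
  obtain ⟨y, hy, hPy⟩ := (Measure.dense_of_ae hP).inter_open_nonempty _ (hs.inter ht)
    (mem_closure_iff.1 hat s hs has)
  exact ⟨y, hy, hPy hy.1⟩

variable {ι : Type*} {l : Filter ι} {μ : Measure ℝ} [μ.IsOpenPosMeasure] {s : Set ℝ} {a b : ℝ}
  {φ : ι → ℝ → ℝ} {ψ : ℝ → ℝ}

lemma exists_eventually_forall_norm_le_of_ae_tendsto_of_monotoneOn (hs : IsOpen s)
    (hab : uIcc a b ⊆ s) (hφ : ∀ i, MonotoneOn (φ i) s)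
    (hlim : ∀ᵐ y ∂μ, y ∈ s → Tendsto (fun i ↦ φ i y) l (𝓝 (ψ y))) :
    ∃ C, ∀ᶠ i in l, ∀ y ∈ uIcc a b, ‖φ i y‖ ≤ C := by
  obtain ⟨p, ⟨hps, hp : p < min a b⟩, hφp⟩ :=
    exists_mem_inter_of_ae_of_mem_closure hs isOpen_Iio (hab ⟨le_rfl, min_le_max⟩)
      (closure_Iio (min a b) ▸ self_mem_Iic) hlim
  obtain ⟨q, ⟨hqs, hq : max a b < q⟩, hφq⟩ :=
    exists_mem_inter_of_ae_of_mem_closure hs isOpen_Ioi (hab ⟨min_le_max, le_rfl⟩)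
      (closure_Ioi (max a b) ▸ self_mem_Ici) hlim
  have hbound : ∀ᶠ i in l, max |φ i p| |φ i q| < max |ψ p| |ψ q| + 1 :=
    (hφp.abs.max hφq.abs).eventually_lt_const (lt_add_one _)
  refine ⟨max |ψ p| |ψ q| + 1, hbound.mono fun i hi y hy ↦ ?_⟩
  have hpy : φ i p ≤ φ i y := hφ i hps (hab hy) (hp.le.trans hy.1)
  have hyq : φ i y ≤ φ i q := hφ i (hab hy) hqs (hy.2.trans hq.le)
  exact (abs_le_max_abs_abs hpy hyq).trans hi.le

variable [l.IsCountablyGenerated] [IsLocallyFiniteMeasure μ]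

lemma intervalIntegrable_of_ae_tendsto_of_monotoneOn [l.NeBot] (hs : IsOpen s)
    (hab : uIcc a b ⊆ s) (hφ : ∀ i, MonotoneOn (φ i) s)
    (hlim : ∀ᵐ y ∂μ, y ∈ s → Tendsto (fun i ↦ φ i y) l (𝓝 (ψ y))) :
    IntervalIntegrable ψ μ a b := by
  obtain ⟨C, hC⟩ := exists_eventually_forall_norm_le_of_ae_tendsto_of_monotoneOn hs hab hφ hlim
  have hsub : Ι a b ⊆ s := uIoc_subset_uIcc.trans hab
  have hlim' : ∀ᵐ y ∂μ.restrict (Ι a b), Tendsto (fun i ↦ φ i y) l (𝓝 (ψ y)) :=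
    (ae_restrict_iff' measurableSet_uIoc).2 (hlim.mono fun y hy hyab ↦ hy (hsub hyab))
  have hmeas : AEStronglyMeasurable ψ (μ.restrict (Ι a b)) :=
    aestronglyMeasurable_of_tendsto_ae l (fun i ↦ (aemeasurable_restrict_of_monotoneOn
      measurableSet_uIoc ((hφ i).mono hsub)).aestronglyMeasurable) hlim'
  refine intervalIntegrable_iff.2 (.of_bound measure_Ioc_lt_top hmeas C ?_)
  filter_upwards [hlim', ae_restrict_mem measurableSet_uIoc] with y hy hyab
  exact le_of_tendsto hy.norm (hC.mono fun i hi ↦ hi y (uIoc_subset_uIcc hyab))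

lemma tendsto_intervalIntegral_of_ae_tendsto_of_monotoneOn (hs : IsOpen s)
    (hab : uIcc a b ⊆ s) (hφ : ∀ i, MonotoneOn (φ i) s)
    (hlim : ∀ᵐ y ∂μ, y ∈ s → Tendsto (fun i ↦ φ i y) l (𝓝 (ψ y))) :
    Tendsto (fun i ↦ ∫ y in a..b, φ i y ∂μ) l (𝓝 (∫ y in a..b, ψ y ∂μ)) := by
  obtain ⟨C, hC⟩ := exists_eventually_forall_norm_le_of_ae_tendsto_of_monotoneOn hs hab hφ hlim
  have hsub : Ι a b ⊆ s := uIoc_subset_uIcc.trans hab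
  refine intervalIntegral.tendsto_integral_filter_of_dominated_convergence (fun _ ↦ C)
    (.of_forall fun i ↦ ?_) (hC.mono fun i hi ↦ .of_forall fun y hy ↦ hi y (uIoc_subset_uIcc hy))
    intervalIntegrable_const (hlim.mono fun y hy hyab ↦ hy (hsub hyab))
  exact (aemeasurable_restrict_of_monotoneOn measurableSet_uIoc
    ((hφ i).mono hsub)).aestronglyMeasurable

end MonotoneLimits

section RightDerivatives

variable {s : Set ℝ}

lemma monotoneOn_rightDeriv_of_convexOn_of_isOpen {f : ℝ → ℝ} (hs : IsOpen s)
    (hf : ConvexOn ℝ s f) : MonotoneOn (fun y ↦ derivWithin f (Ioi y) y) s := by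
  simpa only [hs.interior_eq] using hf.monotoneOn_rightDeriv

lemma integral_rightDeriv_eq_sub_of_convexOn {f : ℝ → ℝ} {a b : ℝ} (hs : IsOpen s)
    (hf : ConvexOn ℝ s f) (hab : uIcc a b ⊆ s) :
    ∫ y in a..b, derivWithin f (Ioi y) y = f b - f a :=
  intervalIntegral.integral_eq_sub_of_hasDeriv_right ((hf.continuousOn hs).mono hab)
    (fun _ hy ↦ hf.hasDerivWithinAt_rightDeriv_of_mem_interior
      (hs.interior_eq.symm ▸ hab (Ioo_subset_Icc_self hy)))
    ((monotoneOn_rightDeriv_of_convexOn_of_isOpen hs hf).mono hab).intervalIntegrable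

theorem stmt16_general {ι : Type*} {l : Filter ι} [l.IsCountablyGenerated]
    {f : ι → ℝ → ℝ} {g : ℝ → ℝ} {a x : ℝ} (hs : IsOpen s) (hf : ∀ i, ConvexOn ℝ s (f i))
    (hgcont : ContinuousOn g s) (hgdiff : ∀ z ∈ s, DifferentiableWithinAt ℝ g (Ioi z) z)
    (has : a ∈ s) (hxs : x ∈ s) (ha : Tendsto (fun i ↦ f i a) l (𝓝 (g a)))
    (hderiv : ∀ᵐ z, z ∈ s →
      Tendsto (fun i ↦ derivWithin (f i) (Ioi z) z) l (𝓝 (derivWithin g (Ioi z) z))) :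
    Tendsto (fun i ↦ f i x) l (𝓝 (g x)) := by
  obtain rfl | _ := l.eq_or_neBot
  · exact tendsto_bot
  obtain ⟨i₀⟩ := l.nonempty_of_neBot
  have hax : uIcc a x ⊆ s := (hf i₀).1.ordConnected.uIcc_subset has hxs
  have hmono (i : ι) := monotoneOn_rightDeriv_of_convexOn_of_isOpen hs (hf i)
  have hg : ∫ y in a..x, derivWithin g (Ioi y) y = g x - g a :=
    intervalIntegral.integral_eq_sub_of_hasDeriv_right (hgcont.mono hax)
      (fun y hy ↦ (hgdiff y (hax (Ioo_subset_Icc_self hy))).hasDerivWithinAt)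
      (intervalIntegrable_of_ae_tendsto_of_monotoneOn hs hax hmono hderiv)
  have hincr : Tendsto (fun i ↦ f i x - f i a) l (𝓝 (g x - g a)) := by
    simpa only [integral_rightDeriv_eq_sub_of_convexOn hs (hf _) hax, hg] using
      tendsto_intervalIntegral_of_ae_tendsto_of_monotoneOn hs hax hmono hderiv
  simpa only [sub_add_cancel] using hincr.add ha

end RightDerivatives

/-- final step of Theorem 5.5: convergence of a sequence of convex
functions dominating a convex limit, given convergence at a point `a` and of the
derivatives away from `b`, extends to all `x ≥ a`. -/
theorem stmt16
    (a b : ℝ)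
    (f : ℕ → ℝ → ℝ)
    (hfconv : ∀ n, ConvexOn ℝ Set.univ (f n))
    (hfdiff : ∀ n, Differentiable ℝ (f n))
    (g : ℝ → ℝ)
    (hgconv : ConvexOn ℝ Set.univ g)
    (hgdiff : Differentiable ℝ g)
    (hge : ∀ n : ℕ, ∀ x : ℝ, g x ≤ f n x)
    (ha : Tendsto (fun n => f n a) atTop (nhds (g a)))
    (hderiv : ∀ z : ℝ, z ≠ b →
      Tendsto (fun n => deriv (f n) z) atTop (nhds (deriv g z))) :
    ∀ x : ℝ, a ≤ x → Tendsto (fun n => f n x) atTop (nhds (g x)) :=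
  fun _ _ ↦ stmt16_general isOpen_univ hfconv hgdiff.continuous.continuousOn
    (fun z _ ↦ (hgdiff z).differentiableWithinAt) (mem_univ a) (mem_univ _) ha
    ((volume.ae_ne b).mono fun z hz _ ↦ by
      simpa only [(hfdiff _ z).derivWithin (uniqueDiffWithinAt_Ioi z),
        (hgdiff z).derivWithin (uniqueDiffWithinAt_Ioi z)] using hderiv z hz)
end
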